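/- Let a₋ > 0, a₊ > 0 and set δ = 2(a₊ − a₋)/(a₊ + a₋). Let ρ > 0, set C₀ = sinh ρ / ρ, and let δ₁ be a real number with |δ₁| ≤ ρ. Suppose ε₁, ε₃ are real numbers satisfying ε₃ − ε₁ = −δ₁ and a₋·h(ε₁) + a₊·ε₃ = a₊·h(δ₁). Then |ε₁ − δ₁| = |ε₃|, and |ε₃| ≤ (C₀/2)|δ₁ δ| if δ₁ < 0 and δ > 0, while |ε₃| ≤ (1/2)|δ₁ δ| in all other cases. -/

import Mathlib

/-- The function `h` from the paper: `h(ε) = ε` if `ε ≥ 0`, `h(ε) = sinh ε` if `ε < 0`. -/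
noncomputable def hfun (ε : ℝ) : ℝ := if 0 ≤ ε then ε else Real.sinh ε

/-!
Eliminating the reflected strength `ε₃ = ε₁ - δ₁` leaves one equation for `ε₁`, whose left-hand side
is strictly increasing, so `ε₁` has the sign of `δ₁`. For rarefactions (`δ₁ ≥ 0`) the equation is
linear and the bound is an equality. For shocks write `x = -ε₁` and `d = -δ₁`, so that
`a₋ sinh x + a₊ x = a₊ (sinh d + d)`. If `a₋ < a₊`, then `d ≤ x`, expansiveness of `sinh` bounds
`x - d` by `(δ / 2) sinh d`, and `sinh d ≤ C₀ d` because `sinh` lies below its chord on `[0, ρ]`.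
If `a₊ ≤ a₋`, then `k d ≤ x ≤ d` with `k = 2 a₊ / (a₊ + a₋) ≤ 1`: the linear parts of the equation
agree at `k d`, while the remainder `sinh - id`, of order three at the origin, gains the factor
`k ^ 3`. Convexity of `sinh` alone would not be enough here.
-/

open Real

theorem hasSum_sinh_sub_self (d : ℝ) :
    HasSum (fun n : ℕ => d ^ (2 * (n + 1) + 1) / (2 * (n + 1) + 1).factorial) (sinh d - d) := by
  simpa using (hasSum_nat_add_iff' 1).mpr (hasSum_sinh d)

theorem sinh_mul_sub_le_pow_three_mul {k d : ℝ} (hk0 : 0 ≤ k) (hk1 : k ≤ 1) (hd : 0 ≤ d) :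
    sinh (k * d) - k * d ≤ k ^ 3 * (sinh d - d) := by
  refine hasSum_le (fun n => ?_) (hasSum_sinh_sub_self (k * d))
    ((hasSum_sinh_sub_self d).mul_left (k ^ 3))
  have hpow : k ^ (2 * (n + 1) + 1) ≤ k ^ 3 := pow_le_pow_of_le_one hk0 hk1 (by omega)
  rw [mul_pow, mul_div_assoc]
  gcongr

theorem sinh_mul_le_mul_sinh {k d : ℝ} (hk0 : 0 ≤ k) (hk1 : k ≤ 1) (hd : 0 ≤ d) :
    sinh (k * d) ≤ k * sinh d := by
  have hremainder : 0 ≤ sinh d - d := sub_nonneg.mpr (self_le_sinh_iff.mpr hd)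
  have hpow : k ^ 3 ≤ k := pow_le_of_le_one hk0 hk1 three_ne_zero
  linarith [sinh_mul_sub_le_pow_three_mul hk0 hk1 hd, mul_le_mul_of_nonneg_right hpow hremainder]

theorem sinh_le_sinh_div_mul {d ρ : ℝ} (hρ : 0 < ρ) (hd : 0 ≤ d) (hdρ : d ≤ ρ) :
    sinh d ≤ sinh ρ / ρ * d :=
  calc sinh d = sinh (d / ρ * ρ) := by rw [div_mul_cancel₀ d hρ.ne']
    _ ≤ d / ρ * sinh ρ := sinh_mul_le_mul_sinh (by positivity) ((div_le_one hρ).mpr hdρ) hρ.le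
    _ = sinh ρ / ρ * d := by ring

theorem strictMono_const_mul_add_const_mul {f : ℝ → ℝ} {a b : ℝ} (hf : Monotone f)
    (ha : 0 ≤ a) (hb : 0 < b) : StrictMono fun x => a * f x + b * x :=
  (hf.const_mul ha).add_strictMono (strictMono_id.const_mul hb)

theorem hfun_of_nonneg {ε : ℝ} (hε : 0 ≤ ε) : hfun ε = ε := if_pos hε

theorem hfun_of_neg {ε : ℝ} (hε : ε < 0) : hfun ε = sinh ε := if_neg hε.not_ge

theorem hfun_eq_min (ε : ℝ) : hfun ε = min ε (sinh ε) := by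
  rcases le_or_gt 0 ε with hε | hε
  · rw [hfun_of_nonneg hε, min_eq_left (self_le_sinh_iff.mpr hε)]
  · rw [hfun_of_neg hε, min_eq_right (sinh_le_self_iff.mpr hε.le)]

theorem monotone_hfun : Monotone hfun := by
  rw [funext hfun_eq_min]
  exact monotone_id.min sinh_strictMono.monotone

/-- The strength `δ` of a composite wave, across which the phase changes from `a` to `b`. -/
noncomputable def phaseStrength (a b : ℝ) : ℝ := 2 * (b - a) / (b + a)

theorem phaseStrength_mul_add {a b : ℝ} (hab : b + a ≠ 0) :
    phaseStrength a b * (b + a) = 2 * (b - a) :=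
  div_mul_cancel₀ _ hab

theorem phaseStrength_pos_iff {a b : ℝ} (hab : 0 < b + a) : 0 < phaseStrength a b ↔ a < b := by
  rw [phaseStrength, div_pos_iff_of_pos_right hab, mul_pos_iff_of_pos_left two_pos, sub_pos]

section Shock

variable {a b d x : ℝ}

theorem abs_sub_le_mul_sinh_of_shock_equation (ha : 0 ≤ a) (hab : a < b) (hd : 0 ≤ d)
    (h : a * sinh x + b * x = b * (sinh d + d)) :
    |x - d| ≤ phaseStrength a b / 2 * sinh d := by
  have hb : 0 < b := ha.trans_lt hab
  have hdx : d ≤ x := by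
    refine (strictMono_const_mul_add_const_mul sinh_strictMono.monotone ha hb).le_iff_le.mp ?_
    linarith [mul_le_mul_of_nonneg_right hab.le (sinh_nonneg_iff.mpr hd)]
  have hexpand : x - d ≤ sinh x - sinh d := by
    linarith [sinh_sub_id_strictMono.monotone hdx]
  rw [abs_of_nonneg (sub_nonneg.mpr hdx)]
  refine le_of_mul_le_mul_right ?_ (add_pos_of_pos_of_nonneg hb ha)
  calc (x - d) * (b + a) = b * (x - d) + a * (x - d) := by ring
    _ ≤ b * (x - d) + a * (sinh x - sinh d) := by gcongr
    _ = (b - a) * sinh d := by linear_combination h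
    _ = phaseStrength a b / 2 * sinh d * (b + a) := by
      linear_combination -(sinh d / 2) * phaseStrength_mul_add (by linarith : b + a ≠ 0)

theorem mul_le_of_shock_equation (hb : 0 < b) (hba : b ≤ a) (hd : 0 ≤ d)
    (h : a * sinh x + b * x = b * (sinh d + d)) : 2 * b / (b + a) * d ≤ x := by
  have ha : 0 < a := hb.trans_le hba
  set k := 2 * b / (b + a)
  have hk : k * (b + a) = 2 * b := div_mul_cancel₀ _ (by positivity)
  have hk0 : 0 ≤ k := by positivity
  have hk1 : k ≤ 1 := (div_le_one (by positivity)).mpr (by linarith)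
  have hremainder : 0 ≤ sinh d - d := sub_nonneg.mpr (self_le_sinh_iff.mpr hd)
  have hcoeff : a * k ^ 3 ≤ b :=
    calc a * k ^ 3 = b * (k * (k * (2 - k))) := by linear_combination k ^ 2 * hk
      _ ≤ b * (1 * 1) := by
        gcongr
        · exact mul_nonneg hk0 (by linarith)
        · linarith [sq_nonneg (k - 1)]
      _ = b := by ring
  refine (strictMono_const_mul_add_const_mul sinh_strictMono.monotone ha.le hb).le_iff_le.mp ?_
  calc a * sinh (k * d) + b * (k * d)
      = k * (b + a) * d + a * (sinh (k * d) - k * d) := by ring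
    _ ≤ k * (b + a) * d + a * (k ^ 3 * (sinh d - d)) := by
      gcongr
      exact sinh_mul_sub_le_pow_three_mul hk0 hk1 hd
    _ = 2 * b * d + a * k ^ 3 * (sinh d - d) := by rw [hk, mul_assoc a]
    _ ≤ 2 * b * d + b * (sinh d - d) := by gcongr
    _ = a * sinh x + b * x := by rw [h]; ring

theorem abs_sub_le_mul_of_shock_equation (hb : 0 < b) (hba : b ≤ a) (hd : 0 ≤ d)
    (h : a * sinh x + b * x = b * (sinh d + d)) :
    |x - d| ≤ -phaseStrength a b / 2 * d := by
  have ha : 0 < a := hb.trans_le hba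
  have hxd : x ≤ d := by
    refine (strictMono_const_mul_add_const_mul sinh_strictMono.monotone ha.le hb).le_iff_le.mp ?_
    linarith [mul_le_mul_of_nonneg_right hba (sinh_nonneg_iff.mpr hd)]
  rw [abs_of_nonpos (sub_nonpos.mpr hxd)]
  calc -(x - d) ≤ d - 2 * b / (b + a) * d := by linarith [mul_le_of_shock_equation hb hba hd h]
    _ = -phaseStrength a b / 2 * d := by rw [phaseStrength]; field_simp; ring

end Shock

/-- The strength `ε` of the 1-wave transmitted when a 1-wave of strength `δ` crosses the composite
wave from phase `a` to phase `b`. The strength of the reflected 3-wave is eliminated: it is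
`ε - δ`. -/
def IsTransmitted (a b δ ε : ℝ) : Prop := a * hfun ε + b * (ε - δ) = b * hfun δ

namespace IsTransmitted

variable {a b δ ε : ℝ}

theorem nonneg_iff (ha : 0 ≤ a) (hb : 0 < b) (h : IsTransmitted a b δ ε) : 0 ≤ ε ↔ 0 ≤ δ := by
  have hzero : hfun 0 = 0 := hfun_of_nonneg le_rfl
  have hbalance : a * hfun ε + b * ε = b * hfun δ + b * δ := by
    rw [IsTransmitted] at h
    linear_combination h
  have hε := (strictMono_const_mul_add_const_mul monotone_hfun ha hb).le_iff_le (a := 0) (b := ε)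
  have hδ := (strictMono_const_mul_add_const_mul monotone_hfun hb.le hb).le_iff_le
    (a := 0) (b := δ)
  simp only [hzero, mul_zero, add_zero] at hε hδ
  rw [← hε, ← hδ, hbalance]

theorem abs_sub_eq_of_nonneg (ha : 0 ≤ a) (hb : 0 < b) (hδ : 0 ≤ δ)
    (h : IsTransmitted a b δ ε) : |ε - δ| = 1 / 2 * |δ * phaseStrength a b| := by
  have hε : 0 ≤ ε := (h.nonneg_iff ha hb).mpr hδ
  rw [IsTransmitted, hfun_of_nonneg hε, hfun_of_nonneg hδ] at h
  have hab : b + a ≠ 0 := by positivity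
  have hsub : ε - δ = 1 / 2 * (δ * phaseStrength a b) := by
    refine mul_right_cancel₀ hab ?_
    linear_combination h - δ / 2 * phaseStrength_mul_add hab
  rw [hsub, abs_mul, abs_of_pos one_half_pos]

theorem shock_equation (ha : 0 ≤ a) (hb : 0 < b) (hδ : δ < 0) (h : IsTransmitted a b δ ε) :
    a * sinh (-ε) + b * -ε = b * (sinh (-δ) + -δ) := by
  have hε : ε < 0 := lt_of_not_ge fun hε => hδ.not_ge ((h.nonneg_iff ha hb).mp hε)
  rw [IsTransmitted, hfun_of_neg hε, hfun_of_neg hδ] at h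
  rw [sinh_neg, sinh_neg]
  linear_combination -h

theorem abs_sub_le_mul_sinh_of_neg (ha : 0 ≤ a) (hab : a < b) (hδ : δ < 0)
    (h : IsTransmitted a b δ ε) : |ε - δ| ≤ phaseStrength a b / 2 * sinh |δ| := by
  rw [abs_of_neg hδ, abs_sub_comm, ← neg_sub_neg]
  exact abs_sub_le_mul_sinh_of_shock_equation ha hab (neg_nonneg.mpr hδ.le)
    (h.shock_equation ha (ha.trans_lt hab) hδ)

theorem abs_sub_le_mul_sinh_div_of_neg {ρ : ℝ} (ha : 0 ≤ a) (hab : a < b) (hδ : δ < 0)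
    (hδρ : |δ| ≤ ρ) (h : IsTransmitted a b δ ε) :
    |ε - δ| ≤ sinh ρ / ρ / 2 * |δ * phaseStrength a b| := by
  have hρ : 0 < ρ := (abs_pos.mpr hδ.ne).trans_le hδρ
  have hpos : 0 < phaseStrength a b := (phaseStrength_pos_iff (by linarith)).mpr hab
  calc |ε - δ| ≤ phaseStrength a b / 2 * sinh |δ| := h.abs_sub_le_mul_sinh_of_neg ha hab hδ
    _ ≤ phaseStrength a b / 2 * (sinh ρ / ρ * |δ|) := by
      gcongr
      exact sinh_le_sinh_div_mul hρ (abs_nonneg δ) hδρ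
    _ = sinh ρ / ρ / 2 * |δ * phaseStrength a b| := by
      rw [abs_mul, abs_of_pos hpos]
      ring

theorem abs_sub_le_of_neg_of_le (hb : 0 < b) (hba : b ≤ a) (hδ : δ < 0)
    (h : IsTransmitted a b δ ε) : |ε - δ| ≤ 1 / 2 * |δ * phaseStrength a b| :=
  calc |ε - δ| = |-ε - -δ| := by rw [neg_sub_neg, abs_sub_comm]
    _ ≤ -phaseStrength a b / 2 * -δ :=
      abs_sub_le_mul_of_shock_equation hb hba (neg_nonneg.mpr hδ.le)
        (h.shock_equation (hb.le.trans hba) hb hδ)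
    _ = 1 / 2 * (δ * phaseStrength a b) := by ring
    _ ≤ 1 / 2 * |δ * phaseStrength a b| := by
      gcongr
      exact le_abs_self _

end IsTransmitted

/-- Interaction estimate for a small 1-wave hitting a composite wave (Simplified solver `R_{LI}`). -/
theorem stmt3 (am ap δ ρ C₀ δ₁ ε₁ ε₃ : ℝ) (ham : 0 < am) (hap : 0 < ap)
    (hδ : δ = 2 * (ap - am) / (ap + am))
    (hρ : 0 < ρ) (hC₀ : C₀ = Real.sinh ρ / ρ) (hδ₁ : |δ₁| ≤ ρ)
    (h1 : ε₃ - ε₁ = -δ₁)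
    (h2 : am * hfun ε₁ + ap * ε₃ = ap * hfun δ₁) :
    |ε₁ - δ₁| = |ε₃| ∧
    ((δ₁ < 0 ∧ 0 < δ) → |ε₃| ≤ (C₀ / 2) * |δ₁ * δ|) ∧
    (¬(δ₁ < 0 ∧ 0 < δ) → |ε₃| ≤ (1/2) * |δ₁ * δ|) := by
  replace hδ : δ = phaseStrength am ap := hδ
  obtain rfl : ε₃ = ε₁ - δ₁ := by linarith
  have h : IsTransmitted am ap δ₁ ε₁ := h2
  rw [hδ, hC₀, phaseStrength_pos_iff (add_pos hap ham)]
  refine ⟨rfl, fun ⟨hneg, hlt⟩ => ?_, fun hnot => ?_⟩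
  · exact h.abs_sub_le_mul_sinh_div_of_neg ham.le hlt hneg hδ₁
  · rcases le_or_gt 0 δ₁ with hδ₁0 | hneg
    · exact (h.abs_sub_eq_of_nonneg ham.le hap hδ₁0).le
    · exact h.abs_sub_le_of_neg_of_le hap (not_lt.mp fun hlt => hnot ⟨hneg, hlt⟩) hneg
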